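/- Let H be a complex Hilbert space, W ⊆ H a closed subspace, B a bounded sesquilinear form on H that is inf-sup stable on W with constant α > 0 (and satisfies the transposed nondegeneracy on W). Let u ∈ H solve B u ψ = F ψ for all ψ ∈ H, where F is a bounded conjugate-linear functional, and let π : H → H be a bounded linear projection with ker π = W. Define G : W' → W as the Corrector Green's operator and K v = −G (B v ·). Then u = π u + K (π u) + G F, i.e. the exact solution decomposes into the interpolated part, its corrector, and a source corrector. -/

import Mathlib

theorem separatingLeft_of_mul_norm_le_iSup
    {R R₁ R₂ V₁ V₂ N : Type*} [CommSemiring R] [CommSemiring R₁] [CommSemiring R₂]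
    [NormedAddCommGroup V₁] [Module R₁ V₁] [AddCommMonoid V₂] [Norm V₂] [Module R₂ V₂]
    [SeminormedAddCommGroup N] [Module R N] {σ₁ : R₁ →+* R} {σ₂ : R₂ →+* R}
    {B : V₁ →ₛₗ[σ₁] V₂ →ₛₗ[σ₂] N} {α : ℝ} (hα : 0 < α)
    (hB : ∀ v, α * ‖v‖ ≤ ⨆ w, ‖B v w‖ / ‖w‖) : B.SeparatingLeft := by
  intro v hv
  have hle : α * ‖v‖ ≤ 0 := by
    simpa only [hv, norm_zero, zero_div, Real.iSup_const_zero] using hB v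
  exact norm_le_zero_iff.mp (nonpos_of_mul_nonpos_right hle hα)

section Corrector

variable {R R₁ R₂ M₁ M₂ N : Type*} [CommSemiring R] [CommRing R₁] [CommSemiring R₂]
  [AddCommGroup M₁] [Module R₁ M₁] [AddCommMonoid M₂] [Module R₂ M₂]
  [AddCommGroup N] [Module R N] {σ₁ : R₁ →+* R} {σ₂ : R₂ →+* R}
  {W : Submodule R₁ M₁} {Z : Submodule R₂ M₂} {B : M₁ →ₛₗ[σ₁] M₂ →ₛₗ[σ₂] N}

theorem eq_of_separatingLeft_domRestrict₁₂ (hB : (B.domRestrict₁₂ W Z).SeparatingLeft)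
    {x y : M₁} (hx : x ∈ W) (hy : y ∈ W) (hxy : ∀ w ∈ Z, B x w = B y w) : x = y := by
  have hsub : (⟨x - y, W.sub_mem hx hy⟩ : W) = 0 := hB _ fun w ↦ by
    rw [LinearMap.domRestrict₁₂_apply, LinearMap.map_sub₂, hxy w w.2, sub_self]
  exact sub_eq_zero.mp (congrArg Subtype.val hsub)

theorem exact_solution_decomposition_general (hB : (B.domRestrict₁₂ W Z).SeparatingLeft)
    {π : Module.End R₁ M₁} (hπ : IsIdempotentElem π) (hker : π.ker ≤ W)
    {F : M₂ → N} {u GF Kπu : M₁} (hu : ∀ w ∈ Z, B u w = F w)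
    (hGFW : GF ∈ W) (hGF : ∀ w ∈ Z, B GF w = F w)
    (hKW : Kπu ∈ W) (hK : ∀ w ∈ Z, B Kπu w = -B (π u) w) :
    u = π u + Kπu + GF := by
  have hfine : u - π u ∈ W :=
    hker (LinearMap.sub_mem_ker_iff.mpr (LinearMap.congr_fun hπ u).symm)
  have hcorrector : u - π u = Kπu + GF := by
    refine eq_of_separatingLeft_domRestrict₁₂ hB hfine (W.add_mem hKW hGFW) fun w hw ↦ ?_
    calc
      B (u - π u) w = F w - B (π u) w := by rw [LinearMap.map_sub₂, hu w hw]
      _ = B Kπu w + B GF w := by rw [hK w hw, hGF w hw, neg_add_eq_sub]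
      _ = B (Kπu + GF) w := (LinearMap.map_add₂ B Kπu GF w).symm
  rw [add_assoc, ← hcorrector, add_sub_cancel]

end Corrector

/-- Abstract exact solution decomposition `u = π u + K (π u) + G F`: the exact
solution splits into its interpolation, the corrector of the interpolation, and the
source corrector, by uniqueness of solutions of the corrector problem on `W`. -/
theorem exact_solution_decomposition
    {H : Type*} [NormedAddCommGroup H] [InnerProductSpace ℂ H] [CompleteSpace H]
    (W : Submodule ℂ H) (hWc : IsClosed (W : Set H))
    (B : H →ₗ[ℂ] H →ₗ⋆[ℂ] ℂ) (CB : ℝ)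
    (hB : ∀ v w : H, ‖B v w‖ ≤ CB * ‖v‖ * ‖w‖)
    (α : ℝ) (hα : 0 < α)
    (hinfsupW : ∀ v ∈ W, α * ‖v‖ ≤ ⨆ w : W, ‖B v w‖ / ‖(w : H)‖)
    (htransW : ∀ w ∈ W, w ≠ 0 → ∃ v ∈ W, B v w ≠ 0)
    (π : H →L[ℂ] H)
    (hproj : ∀ u : H, π (π u) = π u)
    (hker : ∀ u : H, π u = 0 ↔ u ∈ W)
    (F : H →L⋆[ℂ] ℂ)
    (u : H) (hu : ∀ ψ : H, B u ψ = F ψ)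
    (GF : H) (hGFW : GF ∈ W) (hGF : ∀ w ∈ W, B GF w = F w)
    (Kπu : H) (hKW : Kπu ∈ W) (hK : ∀ w ∈ W, B Kπu w = - B (π u) w) :
    u = π u + Kπu + GF := by
  have hsep : (B.domRestrict₁₂ W W).SeparatingLeft :=
    separatingLeft_of_mul_norm_le_iSup hα fun v ↦ hinfsupW v v.2
  exact exact_solution_decomposition_general hsep (π := π.toLinearMap) (LinearMap.ext hproj)
    (fun v ↦ (hker v).mp) (fun w _ ↦ hu w) hGFW hGF hKW hK
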